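/- Let D be a d×d symmetric matrix with rational entries, let Γ = {k ∈ ℤ^d : Dk ∈ ℤ^d} = M(ℤ^d) for an invertible integer matrix M, and let n = |det M|. If {γ_1, …, γ_n} ⊂ ℤ^d is a complete set of representatives of ℤ^d modulo M(ℤ^d), then {M^t D γ_1, …, M^t D γ_n} is a set of integer vectors forming a complete set of representatives of ℤ^d modulo M^t(ℤ^d). -/

import Mathlib

/-!
Since the columns of `M` lie in `Γ`, the matrix `N = D M` is integral, and by symmetry of `D`,
`Mᵀ D = Nᵀ`; so the vectors `Mᵀ D γ_i` are integral. If `Mᵀ D (γ_i - γ_j) = Mᵀ m` with `m`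
integral, then cancelling `Mᵀ` gives `D (γ_i - γ_j) = m`, hence `γ_i - γ_j ∈ Γ = M(ℤ^d)` and `i = j`.
Thus the `Mᵀ D γ_i` are `|det M|` pairwise incongruent vectors modulo `Mᵀ(ℤ^d)`. As this lattice has
index `|det Mᵀ| = |det M|` (`card_quotient_range_mulVecLin`), they represent every coset.
-/

open Matrix

theorem card_quotient_range_mulVecLin {d : ℕ} (A : Matrix (Fin d) (Fin d) ℤ) (hA : A.det ≠ 0) :
    Nat.card ((Fin d → ℤ) ⧸ LinearMap.range A.mulVecLin) = A.det.natAbs := by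
  have hinj : Function.Injective A.mulVecLin := by
    intro x y h
    exact Matrix.mulVec_injective_of_det_ne_zero hA h
  have h := Submodule.natAbs_det_equiv (LinearMap.range A.mulVecLin)
    (LinearEquiv.ofInjective A.mulVecLin hinj)
  rw [← h, ← LinearMap.det_toLin' A]
  congr 2

/-- Pigeonhole: `|det A|` vectors that are pairwise incongruent modulo `A(ℤ^d)` meet every coset. -/
theorem complete_of_pairwise_incongruent {d : ℕ} (A : Matrix (Fin d) (Fin d) ℤ) (hA : A.det ≠ 0)
    {n : ℕ} (hn : n = A.det.natAbs) (w : Fin n → (Fin d → ℤ))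
    (hw : ∀ i j, i ≠ j → ¬ ∃ m : Fin d → ℤ, w i - w j = A.mulVec m) (k : Fin d → ℤ) :
    ∃ i, ∃ m : Fin d → ℤ, k - w i = A.mulVec m := by
  have hcard := card_quotient_range_mulVecLin A hA
  have : Finite ((Fin d → ℤ) ⧸ LinearMap.range A.mulVecLin) :=
    Nat.finite_of_card_ne_zero (by rw [hcard]; exact Int.natAbs_ne_zero.mpr hA)
  let f : Fin n → (Fin d → ℤ) ⧸ LinearMap.range A.mulVecLin := fun i => Submodule.Quotient.mk (w i)
  have hf : Function.Injective f := by
    intro i j hij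
    by_contra hne
    obtain ⟨m, hm⟩ := (Submodule.Quotient.eq _).mp hij
    exact hw i j hne ⟨m, hm.symm⟩
  have hsurj : Function.Surjective f :=
    (hf.bijective_of_nat_card_le (by rw [hcard, Nat.card_fin, hn])).2
  obtain ⟨i, hi⟩ := hsurj (Submodule.Quotient.mk k)
  obtain ⟨m, hm⟩ := (Submodule.Quotient.eq _).mp hi.symm
  exact ⟨i, m, hm.symm⟩

/-- If `D` is symmetric rational, `Γ = {k ∈ ℤ^d : Dk ∈ ℤ^d} = M(ℤ^d)` with `M` an
invertible integer matrix, `n = |det M|`, and `γ_1, …, γ_n` is a complete set of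
representatives of `ℤ^d` mod `M(ℤ^d)`, then the vectors `MᵗDγ_i` are integer vectors
forming a complete set of representatives of `ℤ^d` mod `Mᵗ(ℤ^d)`. -/
theorem stmt11 (d : ℕ) (D : Matrix (Fin d) (Fin d) ℚ) (hsym : Dᵀ = D)
    (M : Matrix (Fin d) (Fin d) ℤ) (hM : M.det ≠ 0)
    (hΓ : {k : Fin d → ℤ | ∀ i, ∃ z : ℤ, D.mulVec (fun j => (k j : ℚ)) i = (z : ℚ)}
        = {v | ∃ n : Fin d → ℤ, v = M.mulVec n})
    (γ : Fin M.det.natAbs → (Fin d → ℤ))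
    (hdistinct : ∀ i j, i ≠ j → ¬ ∃ m : Fin d → ℤ, γ i - γ j = M.mulVec m)
    (hcomplete : ∀ k : Fin d → ℤ, ∃ i, ∃ m : Fin d → ℤ, k - γ i = M.mulVec m) :
    ∃ w : Fin M.det.natAbs → (Fin d → ℤ),
      (∀ i j, ((w i j : ℚ)) =
        (Mᵀ.map (Int.cast : ℤ → ℚ)).mulVec (D.mulVec fun l => (γ i l : ℚ)) j) ∧
      (∀ i j, i ≠ j → ¬ ∃ m : Fin d → ℤ, w i - w j = Mᵀ.mulVec m) ∧
      (∀ k : Fin d → ℤ, ∃ i, ∃ m : Fin d → ℤ, k - w i = Mᵀ.mulVec m) := by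
  have hcol : ∀ j i, ∃ z : ℤ, D.mulVec (fun l => (M l j : ℚ)) i = (z : ℚ) := by
    intro j
    have : (fun l => M l j) ∈ {v | ∃ n : Fin d → ℤ, v = M.mulVec n} :=
      ⟨Pi.single j 1, by ext l; simp⟩
    rw [← hΓ] at this
    exact this
  choose Nt hNt using hcol
  -- The rows of `Nt` are the vectors `D M e_j`, so `Nt = (D M)ᵀ = Mᵀ D`.
  have hND : (Matrix.of Nt).map (Int.cast : ℤ → ℚ) = Mᵀ.map (Int.cast : ℤ → ℚ) * D := by
    ext j i
    rw [Matrix.map_apply, Matrix.of_apply, ← hNt j i, Matrix.mul_apply]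
    simp only [Matrix.mulVec, dotProduct]
    refine Finset.sum_congr rfl fun l _ => ?_
    rw [Matrix.map_apply, Matrix.transpose_apply, mul_comm]
    congr 1
    exact congrFun (congrFun hsym l) i
  have hcast : ∀ (A : Matrix (Fin d) (Fin d) ℤ) (v : Fin d → ℤ) j,
      ((A.mulVec v j : ℤ) : ℚ) = (A.map (Int.cast : ℤ → ℚ)).mulVec (fun l => (v l : ℚ)) j := by
    intro A v j
    simp [Matrix.mulVec, dotProduct]
  have hval : ∀ (v : Fin d → ℤ) j, (((Matrix.of Nt).mulVec v j : ℤ) : ℚ) =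
      (Mᵀ.map (Int.cast : ℤ → ℚ)).mulVec (D.mulVec fun l => (v l : ℚ)) j := by
    intro v j
    rw [hcast, hND, Matrix.mulVec_mulVec]
  have hdetQ : (Mᵀ.map (Int.cast : ℤ → ℚ)).det ≠ 0 := by
    have h : (Mᵀ.map (Int.cast : ℤ → ℚ)).det = ((Mᵀ.det : ℤ) : ℚ) :=
      (RingHom.map_det (Int.castRingHom ℚ) Mᵀ).symm
    rw [h, Matrix.det_transpose]
    exact_mod_cast hM
  have hinc : ∀ i j, i ≠ j → ¬ ∃ m : Fin d → ℤ,
      (Matrix.of Nt).mulVec (γ i) - (Matrix.of Nt).mulVec (γ j) = Mᵀ.mulVec m := by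
    rintro i j hij ⟨m, hm⟩
    rw [← Matrix.mulVec_sub] at hm
    have hD : (D.mulVec fun l => ((γ i - γ j) l : ℚ)) = fun l => (m l : ℚ) := by
      apply Matrix.mulVec_injective_of_det_ne_zero hdetQ
      ext l
      rw [← hval, ← hcast, hm]
    have hmem : γ i - γ j ∈
        {k : Fin d → ℤ | ∀ i, ∃ z : ℤ, D.mulVec (fun j => (k j : ℚ)) i = (z : ℚ)} :=
      fun l => ⟨m l, congrFun hD l⟩
    rw [hΓ] at hmem
    exact hdistinct i j hij hmem
  exact ⟨fun i => (Matrix.of Nt).mulVec (γ i), fun i j => hval (γ i) j, hinc,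
    complete_of_pairwise_incongruent Mᵀ (by rwa [Matrix.det_transpose])
      (by rw [Matrix.det_transpose]) _ hinc⟩
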